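/- (Pick interpolation on the bidisk) Let λ₁,…,λ_N be points of 𝔻² and let w₁,…,w_N ∈ ℂ. There exists an analytic function φ : 𝔻² → ℂ with sup_{𝔻²}|φ| ≤ 1 and φ(λ_i) = w_i for i = 1,…,N if and only if there exist positive semi-definite N×N matrices Γ¹ and Γ² such that for all i,j: 1 − w_i w̄_j = (1 − λ_i¹ λ̄_j¹) Γ¹_{ij} + (1 − λ_i² λ̄_j²) Γ²_{ij}. -/

import Mathlib

open Matrix
open scoped ComplexOrder

/-- The open bidisk in `ℂ × ℂ`. -/
def Bidisk : Set (ℂ × ℂ) := {lam : ℂ × ℂ | ‖lam.1‖ < 1 ∧ ‖lam.2‖ < 1}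

/-!
Given the decomposition, `(1, xᵢ¹ u¹ᵢ, xᵢ² u²ᵢ)` and `(wᵢ, u¹ᵢ, u²ᵢ)`, with `uᵏ` Gram vectors of
`Γᵏ` and `xᵢ = λᵢ`, have the same Gram matrix. The isometry between them (the lurking isometry) is
the colligation of a linear system whose transfer function is the interpolant.

Conversely, the matrices that decompose form a closed convex cone, so by Hahn–Banach it suffices to
pair `(1 - wᵢ w̄ⱼ)` with every `R` for which both `(1 - λ̄ᵢᵏ λⱼᵏ) Rᵢⱼ` are positive semidefinite.
For such `R` one shows that `(1 - w̄ᵢ wⱼ) Rᵢⱼ` is positive semidefinite, an instance of Andô's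
inequality. If `b` are Gram vectors of the first matrix, the second provides an analytic `Ψ`,
unitary on the unit circle, with `Ψ(λᵢ¹) bᵢ = λᵢ² bᵢ`. When `φ` is a polynomial in its second
variable, `Φ(ζ) = φ(ζ, Ψ(ζ))` is a contraction on the circle and `Φ(λᵢ¹) bᵢ = wᵢ bᵢ`, so the claim
is the necessity of the one-variable tangential Pick condition for `Φ`. A general `φ` is dilated
and then interpolated in its second variable at roots of unity.
-/

section ConeImage

open Filter Topology

variable {E F : Type*} [NormedAddCommGroup E] [NormedSpace ℝ E] [FiniteDimensional ℝ E]
  [NormedAddCommGroup F] [NormedSpace ℝ F]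

theorem exists_pos_mul_norm_le_norm_of_properCone (C : ProperCone ℝ E) (L : E →L[ℝ] F)
    (hL : ∀ x ∈ C, L x = 0 → x = 0) : ∃ c > 0, ∀ x ∈ C, c * ‖x‖ ≤ ‖L x‖ := by
  have : ProperSpace E := FiniteDimensional.proper_real E
  have hcompact : IsCompact ((C : Set E) ∩ Metric.sphere 0 1) :=
    (isCompact_sphere 0 1).inter_left C.isClosed
  obtain hempty | hne := ((C : Set E) ∩ Metric.sphere 0 1).eq_empty_or_nonempty
  · refine ⟨1, one_pos, fun x hx => ?_⟩
    suffices x = 0 by simp [this]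
    by_contra h0
    have hmem : ‖x‖⁻¹ • x ∈ (C : Set E) ∩ Metric.sphere 0 1 :=
      ⟨C.smul_mem hx (by positivity), by simp [norm_smul, h0]⟩
    simp [hempty] at hmem
  · obtain ⟨x₀, ⟨hx₀C, hx₀⟩, hmin⟩ := hcompact.exists_isMinOn hne L.continuous.norm.continuousOn
    have hx₀0 : x₀ ≠ 0 := by rintro rfl; simp at hx₀
    refine ⟨‖L x₀‖, norm_pos_iff.2 fun h => hx₀0 (hL x₀ hx₀C h), fun x hx => ?_⟩
    obtain rfl | h0 := eq_or_ne x 0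
    · simp
    have hmem : ‖x‖⁻¹ • x ∈ (C : Set E) ∩ Metric.sphere 0 1 :=
      ⟨C.smul_mem hx (by positivity), by simp [norm_smul, h0]⟩
    have hle : ‖L x₀‖ ≤ ‖x‖⁻¹ * ‖L x‖ := by simpa [norm_smul] using hmin hmem
    rwa [← div_eq_inv_mul, le_div_iff₀ (norm_pos_iff.2 h0)] at hle

theorem isClosed_image_properCone (C : ProperCone ℝ E) (L : E →L[ℝ] F)
    (hL : ∀ x ∈ C, L x = 0 → x = 0) : IsClosed (L '' C) := by
  have : ProperSpace E := FiniteDimensional.proper_real E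
  obtain ⟨c, hc, hbound⟩ := exists_pos_mul_norm_le_norm_of_properCone C L hL
  refine isClosed_of_closure_subset fun y hy => ?_
  obtain ⟨Y, hY, hlim⟩ := mem_closure_iff_seq_limit.1 hy
  choose X hXC hXY using hY
  obtain ⟨b, hb⟩ := (Metric.isBounded_range_of_tendsto Y hlim).exists_norm_le
  have hXb : ∀ n, X n ∈ Metric.closedBall (0 : E) (b / c) := fun n => by
    have := (hbound _ (hXC n)).trans (hXY n ▸ hb _ (Set.mem_range_self n))
    rwa [mem_closedBall_zero_iff, le_div_iff₀' hc]
  obtain ⟨x, -, ψ, hψ, hx⟩ := (isCompact_closedBall (0 : E) (b / c)).tendsto_subseq hXb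
  refine ⟨x, C.isClosed.mem_of_tendsto hx (.of_forall fun n => hXC _), ?_⟩
  refine tendsto_nhds_unique ((L.continuous.tendsto x).comp hx) ?_
  simpa only [Function.comp_def, hXY] using hlim.comp hψ.tendsto_atTop

end ConeImage

section HadamardCone

variable {ι κ : Type*}

theorem isClosed_setOf_posSemidef [Finite ι] : IsClosed {P : Matrix ι ι ℂ | P.PosSemidef} := by
  have := Fintype.ofFinite ι
  simp only [posSemidef_iff_dotProduct_mulVec, Set.ofPred_and, Set.ofPred_forall]
  refine (isClosed_eq (by fun_prop) continuous_id).inter (isClosed_iInter fun x => ?_)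
  exact isClosed_le continuous_const (by fun_prop)

/-- Families of positive semidefinite matrices, as a proper cone of the real normed space of all
families of matrices. -/
def posSemidefCone (κ ι : Type*) [Finite ι] : ProperCone ℝ (κ → Matrix ι ι ℂ) where
  carrier := {Γ | ∀ k, (Γ k).PosSemidef}
  zero_mem' _ := .zero
  add_mem' hΓ hΓ' k := (hΓ k).add (hΓ' k)
  smul_mem' c _ hΓ k := (hΓ k).smul c.2
  isClosed' := by
    simp only [Set.ofPred_forall]
    exact isClosed_iInter fun k => isClosed_setOf_posSemidef.preimage
      (f := fun Γ : κ → Matrix ι ι ℂ => Γ k) (continuous_apply k)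

variable [Fintype κ]

/-- The map `Γ ↦ ∑ₖ Aₖ ⊙ Γₖ`, whose values on `posSemidefCone` are the matrices with an
Agler decomposition. -/
def hadamardSum (A : κ → Matrix ι ι ℂ) : (κ → Matrix ι ι ℂ) →L[ℝ] Matrix ι ι ℂ where
  toFun Γ := ∑ k, A k ⊙ Γ k
  map_add' Γ Γ' := by simp only [Pi.add_apply, hadamard_add, Finset.sum_add_distrib]
  map_smul' c Γ := by simp only [Pi.smul_apply, hadamard_smul, Finset.smul_sum, RingHom.id_apply]
  cont := continuous_finsetSum _ fun k _ => continuous_matrix fun i j => by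
    simp only [hadamard_apply]; fun_prop

theorem hadamardSum_apply (A Γ : κ → Matrix ι ι ℂ) : hadamardSum A Γ = ∑ k, A k ⊙ Γ k := rfl

theorem eq_zero_of_hadamardSum_eq_zero [Finite ι] {A : κ → Matrix ι ι ℂ} (hA : ∀ k i, 0 < A k i i)
    {Γ : κ → Matrix ι ι ℂ} (hΓ : Γ ∈ posSemidefCone κ ι) (h : hadamardSum A Γ = 0) : Γ = 0 := by
  have := Fintype.ofFinite ι
  funext k
  refine (hΓ k).trace_eq_zero_iff.1 (Finset.sum_eq_zero fun i _ => ?_)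
  have hsum : ∑ k, A k i i * Γ k i i = 0 := by
    simpa [hadamardSum_apply, Matrix.sum_apply] using congr_fun₂ h i i
  have hterm := (Finset.sum_eq_zero_iff_of_nonneg fun k _ =>
    mul_nonneg (hA k i).le (hΓ k).diag_nonneg).1 hsum k (Finset.mem_univ k)
  exact (mul_eq_zero.1 hterm).resolve_left (hA k i).ne'

variable [Fintype ι]

theorem exists_re_trace_mul_eq (f : Module.Dual ℝ (Matrix ι ι ℂ)) :
    ∃ Q : Matrix ι ι ℂ, ∀ M, f M = (Q * M).trace.re := by
  classical
  let g : Module.Dual ℂ (Matrix ι ι ℂ) := f.extendRCLike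
  refine ⟨.of fun i j => g (single j i 1), fun M => ?_⟩
  have hs (i j : ι) : single i j (M i j) = M i j • single i j 1 := by simp
  have hg : g M = (M * Matrix.of fun i j => g (single j i 1)).trace := by
    conv_lhs => rw [matrix_eq_sum_single M]
    simp only [hs, map_sum, map_smul, smul_eq_mul, trace, diag_apply, Matrix.mul_apply, of_apply]
  rw [trace_mul_comm, ← hg]
  exact (Module.Dual.re_extendRCLike_apply (𝕜 := ℂ) f M).symm

theorem posSemidef_add_conjTranspose {Q : Matrix ι ι ℂ}
    (hQ : ∀ P : Matrix ι ι ℂ, P.PosSemidef → 0 ≤ (Q * P).trace.re) : (Q + Qᴴ).PosSemidef := by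
  refine .of_dotProduct_mulVec_nonneg (by simp [IsHermitian, add_comm]) fun x => ?_
  have hx := hQ _ (posSemidef_vecMulVec_self_star x)
  rw [mul_vecMulVec, trace_vecMulVec, dotProduct_comm] at hx
  have hconj : star x ⬝ᵥ Qᴴ *ᵥ x = starRingEnd ℂ (star x ⬝ᵥ Q *ᵥ x) := by
    rw [starRingEnd_apply, star_dotProduct, star_mulVec, conjTranspose_conjTranspose,
      dotProduct_mulVec]
  rw [add_mulVec, dotProduct_add, hconj, Complex.add_conj]
  exact_mod_cast mul_nonneg zero_le_two hx

theorem trace_hadamard_mul (A Q Γ : Matrix ι ι ℂ) :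
    ((Aᵀ ⊙ Q) * Γ).trace = (Q * (A ⊙ Γ)).trace := by
  simp only [trace, diag_apply, Matrix.mul_apply, hadamard_apply, transpose_apply]
  exact Finset.sum_congr rfl fun i _ => Finset.sum_congr rfl fun j _ => by ring

theorem re_trace_conjTranspose_mul {M : Matrix ι ι ℂ} (hM : M.IsHermitian) (Q : Matrix ι ι ℂ) :
    (Qᴴ * M).trace.re = (Q * M).trace.re := by
  conv_lhs => rw [← hM.eq, ← conjTranspose_mul, trace_conjTranspose, trace_mul_comm]
  exact Complex.conj_re _

theorem posSemidef_transpose_hadamard_add_conjTranspose {A : κ → Matrix ι ι ℂ}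
    {Q : Matrix ι ι ℂ} (hA : ∀ k, (A k).IsHermitian)
    (hQ : ∀ Γ ∈ posSemidefCone κ ι, 0 ≤ (Q * hadamardSum A Γ).trace.re) (k : κ) :
    ((A k)ᵀ ⊙ (Q + Qᴴ)).PosSemidef := by
  classical
  have hconj : (A k)ᵀ ⊙ Qᴴ = ((A k)ᵀ ⊙ Q)ᴴ := by
    ext i j
    simp [← (hA k).apply i j]
  rw [hadamard_add, hconj]
  refine posSemidef_add_conjTranspose fun P hP => ?_
  have hsum : A k ⊙ P = hadamardSum A (Pi.single k P) := by
    rw [hadamardSum_apply, Finset.sum_eq_single k (by simp +contextual) (by simp),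
      Pi.single_eq_same]
  rw [trace_hadamard_mul, hsum]
  refine hQ _ fun l => ?_
  obtain rfl | hne := eq_or_ne l k
  · rwa [Pi.single_eq_same]
  · rw [Pi.single_eq_of_ne hne]
    exact .zero

open scoped Matrix.Norms.L2Operator in
theorem exists_posSemidef_eq_sum_hadamard {A : κ → Matrix ι ι ℂ} (hA : ∀ k, (A k).IsHermitian)
    (hpos : ∀ k i, 0 < A k i i) {M : Matrix ι ι ℂ} (hM : M.IsHermitian)
    (h : ∀ R : Matrix ι ι ℂ, (∀ k, ((A k)ᵀ ⊙ R).PosSemidef) → 0 ≤ (R * M).trace.re) :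
    ∃ Γ : κ → Matrix ι ι ℂ, (∀ k, (Γ k).PosSemidef) ∧ M = ∑ k, A k ⊙ Γ k := by
  classical
  let K : ProperCone ℝ (Matrix ι ι ℂ) :=
    { toSubmodule := PointedCone.map (hadamardSum A).toLinearMap (posSemidefCone κ ι)
      isClosed' := isClosed_image_properCone _ (hadamardSum A) fun Γ hΓ =>
        eq_zero_of_hadamardSum_eq_zero hpos hΓ }
  suffices M ∈ K by
    obtain ⟨Γ, hΓ, rfl⟩ := this
    exact ⟨Γ, hΓ, rfl⟩
  by_contra hMK
  obtain ⟨f, hfK, hfM⟩ := K.hyperplane_separation_point hMK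
  obtain ⟨Q, hQ⟩ := exists_re_trace_mul_eq f.toLinearMap
  have hR := h (Q + Qᴴ) <| posSemidef_transpose_hadamard_add_conjTranspose hA fun Γ hΓ =>
    hQ _ ▸ hfK _ ⟨Γ, hΓ, rfl⟩
  rw [add_mul, trace_add, Complex.add_re, re_trace_conjTranspose_mul hM, ← hQ] at hR
  exact hfM.not_ge (nonneg_add_self_iff.1 hR)

end HadamardCone

section Gram

variable {ι : Type*}

theorem exists_eq_gram_of_posSemidef [Fintype ι] {P : Matrix ι ι ℂ} (hP : P.PosSemidef) :
    ∃ u : ι → EuclideanSpace ℂ ι, P = gram ℂ u := by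
  classical
  obtain ⟨B, rfl⟩ : ∃ B : Matrix ι ι ℂ, P = Bᴴ * B := by
    open scoped MatrixOrder in exact CStarAlgebra.nonneg_iff_eq_star_mul_self.1 hP.nonneg
  refine ⟨fun i => WithLp.toLp 2 fun k => B k i, ?_⟩
  ext i j
  simp [gram_apply, PiLp.inner_apply, Matrix.mul_apply, mul_comm]

variable {𝕜 E : Type*} [RCLike 𝕜] [NormedAddCommGroup E] [InnerProductSpace 𝕜 E]

theorem norm_sum_smul_eq_of_gram_eq [Fintype ι] {x y : ι → E} (h : gram 𝕜 x = gram 𝕜 y)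
    (c : ι → 𝕜) : ‖∑ i, c i • x i‖ = ‖∑ i, c i • y i‖ := by
  rw [norm_eq_sqrt_re_inner (𝕜 := 𝕜), norm_eq_sqrt_re_inner (𝕜 := 𝕜),
    ← star_dotProduct_gram_mulVec, h, star_dotProduct_gram_mulVec]

theorem exists_linearIsometry_of_gram_eq [Finite ι] [FiniteDimensional 𝕜 E] {x y : ι → E}
    (h : gram 𝕜 x = gram 𝕜 y) : ∃ V : E →ₗᵢ[𝕜] E, ∀ i, V (x i) = y i := by
  classical
  have := Fintype.ofFinite ι
  let X := Fintype.linearCombination 𝕜 x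
  let Y := Fintype.linearCombination 𝕜 y
  have hnorm (c : ι → 𝕜) : ‖Y c‖ = ‖X c‖ := (norm_sum_smul_eq_of_gram_eq h c).symm
  obtain ⟨g, hg⟩ := X.rangeRestrict.exists_rightInverse_of_surjective X.range_rangeRestrict
  have hXg (s : LinearMap.range X) : X (g s) = s := congr_arg Subtype.val (LinearMap.congr_fun hg s)
  have hYg (c : ι → 𝕜) : Y (g (X.rangeRestrict c)) = Y c := by
    rw [← sub_eq_zero, ← map_sub, ← norm_eq_zero, hnorm, map_sub, hXg]
    simp
  let L : LinearMap.range X →ₗᵢ[𝕜] E :=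
    { toLinearMap := Y ∘ₗ g
      norm_map' s := (hnorm (g s)).trans (congr_arg norm (hXg s)) }
  refine ⟨L.extend, fun i => ?_⟩
  have hX : X (Pi.single i 1) = x i := by simp [X, Fintype.linearCombination_apply_single]
  have hY : Y (Pi.single i 1) = y i := by simp [Y, Fintype.linearCombination_apply_single]
  rw [← hX, ← hY, ← hYg]
  exact L.extend_apply (X.rangeRestrict (Pi.single i 1))

end Gram

section TransferFunction

variable {H U : Type*} [NormedAddCommGroup H] [InnerProductSpace ℂ H]
  [NormedAddCommGroup U] [InnerProductSpace ℂ U]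

/-- The map sending a pair (state, input) to the next state, for the linear system whose
colligation is `V`. -/
noncomputable def nextState (V : WithLp 2 (H × U) →ₗᵢ[ℂ] WithLp 2 (H × U)) : H × U →L[ℂ] H :=
  WithLp.fstL 2 ℂ H U ∘L V.toContinuousLinearMap ∘L
    (WithLp.prodContinuousLinearEquiv 2 ℂ H U).symm.toContinuousLinearMap

/-- The map sending a pair (state, input) to the output, for the linear system whose colligation
is `V`. -/
noncomputable def systemOutput (V : WithLp 2 (H × U) →ₗᵢ[ℂ] WithLp 2 (H × U)) : H × U →L[ℂ] U :=
  WithLp.sndL 2 ℂ H U ∘L V.toContinuousLinearMap ∘L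
    (WithLp.prodContinuousLinearEquiv 2 ℂ H U).symm.toContinuousLinearMap

/-- The operator `1 - A Δ`, where `A` is the state-to-state block of `V`. The system obtained by
feeding the state back through `Δ` is well posed when this is invertible. -/
noncomputable def feedbackOperator (V : WithLp 2 (H × U) →ₗᵢ[ℂ] WithLp 2 (H × U)) (Δ : H →L[ℂ] H) :
    H →L[ℂ] H :=
  1 - nextState V ∘L .inl ℂ H U ∘L Δ

/-- The state of the feedback system as a function of the input: the operator `(1 - A Δ)⁻¹ B`,
where `A` and `B` are the blocks of `nextState V`. -/
noncomputable def feedbackState (V : WithLp 2 (H × U) →ₗᵢ[ℂ] WithLp 2 (H × U)) (Δ : H →L[ℂ] H) :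
    U →L[ℂ] H :=
  Ring.inverse (feedbackOperator V Δ) ∘L nextState V ∘L .inr ℂ H U

/-- The transfer function `D + C Δ (1 - A Δ)⁻¹ B` of the colligation `V = [A B; C D]`, as a
function of the feedback operator `Δ`. -/
noncomputable def transferFunction (V : WithLp 2 (H × U) →ₗᵢ[ℂ] WithLp 2 (H × U))
    (Δ : H →L[ℂ] H) : U →L[ℂ] U :=
  systemOutput V ∘L (.inl ℂ H U ∘L Δ ∘L feedbackState V Δ + .inr ℂ H U)

theorem exists_colligation {ι : Type*} [Finite ι] [FiniteDimensional ℂ H] [FiniteDimensional ℂ U]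
    {a a' : ι → H} {b b' : ι → U}
    (h : ∀ i j, inner ℂ (a i) (a j) + inner ℂ (b i) (b j) =
      inner ℂ (a' i) (a' j) + inner ℂ (b' i) (b' j)) :
    ∃ V : WithLp 2 (H × U) →ₗᵢ[ℂ] WithLp 2 (H × U),
      ∀ i, V (WithLp.toLp 2 (a i, b i)) = WithLp.toLp 2 (a' i, b' i) :=
  exists_linearIsometry_of_gram_eq (x := fun i => WithLp.toLp 2 (a i, b i))
    (y := fun i => WithLp.toLp 2 (a' i, b' i)) <| by
      ext i j
      simp only [gram_apply, WithLp.prod_inner_apply, h]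

variable {V : WithLp 2 (H × U) →ₗᵢ[ℂ] WithLp 2 (H × U)} {Δ : H →L[ℂ] H}

theorem norm_sq_nextState_add_norm_sq_systemOutput (V : WithLp 2 (H × U) →ₗᵢ[ℂ] WithLp 2 (H × U))
    (s : H) (u : U) :
    ‖nextState V (s, u)‖ ^ 2 + ‖systemOutput V (s, u)‖ ^ 2 = ‖s‖ ^ 2 + ‖u‖ ^ 2 := by
  have h := V.norm_map (WithLp.toLp 2 (s, u))
  rw [← sq_eq_sq₀ (norm_nonneg _) (norm_nonneg _), WithLp.prod_norm_sq_eq_of_L2,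
    WithLp.prod_norm_sq_eq_of_L2] at h
  exact h

theorem feedbackOperator_apply (V : WithLp 2 (H × U) →ₗᵢ[ℂ] WithLp 2 (H × U)) (Δ : H →L[ℂ] H)
    (s : H) : feedbackOperator V Δ s = s - nextState V (Δ s, 0) := rfl

theorem isUnit_feedbackOperator [FiniteDimensional ℂ H]
    (h : ∀ s, nextState V (Δ s, 0) = s → s = 0) : IsUnit (feedbackOperator V Δ) := by
  rw [ContinuousLinearMap.isUnit_iff_isUnit_toLinearMap, LinearMap.isUnit_iff_ker_eq_bot,
    LinearMap.ker_eq_bot']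
  exact fun s hs => h s (sub_eq_zero.1 hs).symm

theorem norm_nextState_le (V : WithLp 2 (H × U) →ₗᵢ[ℂ] WithLp 2 (H × U)) (s : H) :
    ‖nextState V (s, 0)‖ ≤ ‖s‖ := by
  have h := norm_sq_nextState_add_norm_sq_systemOutput V s 0
  refine le_of_sq_le_sq ?_ (norm_nonneg _)
  nlinarith [sq_nonneg ‖systemOutput V (s, 0)‖, norm_zero (E := U)]

theorem isUnit_feedbackOperator_of_norm_lt [FiniteDimensional ℂ H] (hΔ : ∀ s, s ≠ 0 → ‖Δ s‖ < ‖s‖) :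
    IsUnit (feedbackOperator V Δ) := isUnit_feedbackOperator fun s hs => by
  by_contra h0
  exact (hs ▸ norm_nextState_le V (Δ s)).not_gt (hΔ s h0)

theorem nextState_feedbackState (hu : IsUnit (feedbackOperator V Δ)) (u : U) :
    nextState V (Δ (feedbackState V Δ u), u) = feedbackState V Δ u := by
  have h : feedbackOperator V Δ (feedbackState V Δ u) = nextState V (0, u) :=
    congr($(Ring.mul_inverse_cancel _ hu) (nextState V (0, u)))
  rw [feedbackOperator_apply, sub_eq_iff_eq_add] at h
  conv_rhs => rw [h, ← map_add, Prod.mk_add_mk, zero_add, add_zero]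

theorem feedbackState_eq (hu : IsUnit (feedbackOperator V Δ)) {s : H} {u : U}
    (h : nextState V (Δ s, u) = s) : feedbackState V Δ u = s := by
  have hs : feedbackOperator V Δ s = nextState V (0, u) := by
    rw [feedbackOperator_apply, sub_eq_iff_eq_add, ← map_add]
    simpa using h.symm
  have := congr($(Ring.inverse_mul_cancel _ hu) s)
  rwa [mul_apply_eq_comp, hs] at this

theorem transferFunction_apply (V : WithLp 2 (H × U) →ₗᵢ[ℂ] WithLp 2 (H × U)) (Δ : H →L[ℂ] H)
    (u : U) : transferFunction V Δ u = systemOutput V (Δ (feedbackState V Δ u), u) := by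
  simp [transferFunction, ← map_add]

theorem norm_sq_transferFunction (hu : IsUnit (feedbackOperator V Δ)) (u : U) :
    ‖transferFunction V Δ u‖ ^ 2 =
      ‖u‖ ^ 2 - (‖feedbackState V Δ u‖ ^ 2 - ‖Δ (feedbackState V Δ u)‖ ^ 2) := by
  have h := norm_sq_nextState_add_norm_sq_systemOutput V (Δ (feedbackState V Δ u)) u
  rw [nextState_feedbackState hu] at h
  rw [transferFunction_apply]
  linarith

theorem norm_transferFunction_apply_le (hu : IsUnit (feedbackOperator V Δ)) (hΔ : ∀ s, ‖Δ s‖ ≤ ‖s‖)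
    (u : U) : ‖transferFunction V Δ u‖ ≤ ‖u‖ := by
  refine le_of_sq_le_sq ?_ (norm_nonneg _)
  rw [norm_sq_transferFunction hu, sub_le_self_iff, sub_nonneg]
  gcongr
  exact hΔ _

theorem norm_transferFunction_apply (hu : IsUnit (feedbackOperator V Δ)) (hΔ : ∀ s, ‖Δ s‖ = ‖s‖)
    (u : U) : ‖transferFunction V Δ u‖ = ‖u‖ := by
  rw [← sq_eq_sq₀ (norm_nonneg _) (norm_nonneg _), norm_sq_transferFunction hu, hΔ, sub_self,
    sub_zero]

theorem transferFunction_apply_eq (hu : IsUnit (feedbackOperator V Δ)) {s : H} {u v : U}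
    (h : V (WithLp.toLp 2 (Δ s, u)) = WithLp.toLp 2 (s, v)) : transferFunction V Δ u = v := by
  have hs : feedbackState V Δ u = s := feedbackState_eq hu congr(($h).fst)
  rw [transferFunction_apply, hs]
  exact congr(($h).snd)

theorem differentiableAt_transferFunction [CompleteSpace H] {E : Type*} [NormedAddCommGroup E]
    [NormedSpace ℂ E] {Δ : E → H →L[ℂ] H} {z : E} (hΔ : DifferentiableAt ℂ Δ z)
    (hu : IsUnit (feedbackOperator V (Δ z))) :
    DifferentiableAt ℂ (fun z => transferFunction V (Δ z)) z := by
  have hfeedback : DifferentiableAt ℂ (fun z => feedbackOperator V (Δ z)) z := by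
    unfold feedbackOperator
    fun_prop
  have : DifferentiableAt ℂ (fun z => Ring.inverse (feedbackOperator V (Δ z))) z :=
    (differentiableAt_inverse (𝕜 := ℂ) hu).fun_comp' z hfeedback
  have : DifferentiableAt ℂ (fun z => feedbackState V (Δ z)) z := by
    unfold feedbackState
    fun_prop
  unfold transferFunction
  fun_prop

end TransferFunction

section UnitaryInterpolation

variable {ι H U : Type*} [NormedAddCommGroup H] [InnerProductSpace ℂ H]
  [NormedAddCommGroup U] [InnerProductSpace ℂ U]

theorem one_sub_conj_mul_ne_zero {a b : ℂ} (ha : ‖a‖ < 1) (hb : ‖b‖ ≤ 1) :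
    1 - starRingEnd ℂ a * b ≠ 0 := fun h => by
  have hlt : ‖starRingEnd ℂ a * b‖ < 1 := by
    rw [norm_mul, RCLike.norm_conj]
    exact (mul_le_of_le_one_right (norm_nonneg _) hb).trans_lt ha
  rw [← sub_eq_zero.1 h, norm_one] at hlt
  exact lt_irrefl _ hlt

theorem isUnit_feedbackOperator_smul_one [FiniteDimensional ℂ H]
    {V : WithLp 2 (H × U) →ₗᵢ[ℂ] WithLp 2 (H × U)} {a : ι → H} {b c : ι → U} {z : ι → ℂ}
    (ha : Submodule.span ℂ (Set.range a) = ⊤) (hz : ∀ i, ‖z i‖ < 1)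
    (hV : ∀ i, V (WithLp.toLp 2 (z i • a i, b i)) = WithLp.toLp 2 (a i, c i)) {ζ : ℂ}
    (hζ : ‖ζ‖ ≤ 1) : IsUnit (feedbackOperator V (ζ • 1)) := by
  refine isUnit_feedbackOperator fun s (hs : nextState V (ζ • s, 0) = s) => ?_
  have hout : systemOutput V (ζ • s, 0) = 0 := by
    have h := norm_sq_nextState_add_norm_sq_systemOutput V (ζ • s) 0
    rw [hs, norm_smul, norm_zero, mul_pow] at h
    have hζ' : ‖ζ‖ ^ 2 ≤ 1 := pow_le_one₀ (norm_nonneg _) hζ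
    rw [← norm_eq_zero, ← sq_eq_zero_iff]
    nlinarith [sq_nonneg ‖s‖, sq_nonneg ‖systemOutput V (ζ • s, 0)‖]
  have hVs : V (WithLp.toLp 2 (ζ • s, (0 : U))) = WithLp.toLp 2 (s, 0) :=
    congr_arg (WithLp.toLp 2) (Prod.ext hs hout)
  have horth (i : ι) : inner ℂ s (a i) = 0 := by
    have h := V.inner_map_map (WithLp.toLp 2 (z i • a i, b i)) (WithLp.toLp 2 (ζ • s, 0))
    simp only [hVs, hV, WithLp.prod_inner_apply, inner_smul_left, inner_smul_right,
      inner_zero_right, add_zero] at h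
    have hmul : (1 - starRingEnd ℂ (z i) * ζ) * inner ℂ (a i) s = 0 := by linear_combination h
    exact inner_eq_zero_symm.1
      ((mul_eq_zero.1 hmul).resolve_left (one_sub_conj_mul_ne_zero (hz i) hζ))
  have hzero : innerₛₗ ℂ s = 0 := LinearMap.ext_on_range ha horth
  exact inner_self_eq_zero.1 congr($hzero s)

theorem mem_unitary_of_norm_map [FiniteDimensional ℂ U] [CompleteSpace U] {T : U →L[ℂ] U}
    (hT : ∀ u, ‖T u‖ = ‖u‖) : T ∈ unitary (U →L[ℂ] U) := by
  refine IsUnit.mem_unitary_of_star_mul_self ?_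
    ((ContinuousLinearMap.norm_map_iff_adjoint_comp_self T).1 hT)
  rw [ContinuousLinearMap.isUnit_iff_isUnit_toLinearMap, LinearMap.isUnit_iff_ker_eq_bot,
    LinearMap.ker_eq_bot']
  exact fun u hu => norm_eq_zero.1 <| (hT u).symm.trans (norm_eq_zero.2 hu)

theorem exists_unitary_interpolant_of_span_eq_top [Finite ι] [FiniteDimensional ℂ H]
    [FiniteDimensional ℂ U] [CompleteSpace U] {a : ι → H} {b c : ι → U} {z : ι → ℂ}
    (ha : Submodule.span ℂ (Set.range a) = ⊤) (hz : ∀ i, ‖z i‖ < 1)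
    (h : ∀ i j, inner ℂ (b i) (b j) - inner ℂ (c i) (c j) =
      (1 - starRingEnd ℂ (z i) * z j) * inner ℂ (a i) (a j)) :
    ∃ Ψ : ℂ → U →L[ℂ] U, (∀ ζ, ‖ζ‖ ≤ 1 → DifferentiableAt ℂ Ψ ζ) ∧
      (∀ ζ, ‖ζ‖ = 1 → Ψ ζ ∈ unitary (U →L[ℂ] U)) ∧ ∀ i, Ψ (z i) (b i) = c i := by
  have : CompleteSpace H := FiniteDimensional.complete ℂ H
  obtain ⟨V, hV⟩ := exists_colligation (a := fun i => z i • a i) (a' := a) (b := b) (b' := c)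
    fun i j => by
      rw [inner_smul_left, inner_smul_right]
      linear_combination h i j
  have hu {ζ : ℂ} (hζ : ‖ζ‖ ≤ 1) := isUnit_feedbackOperator_smul_one ha hz hV hζ
  refine ⟨fun ζ => transferFunction V (ζ • 1), fun ζ hζ => ?_, fun ζ hζ => ?_, fun i => ?_⟩
  · exact differentiableAt_transferFunction (by fun_prop) (hu hζ)
  · exact mem_unitary_of_norm_map <| norm_transferFunction_apply (hu hζ.le) fun s => by
      simp [norm_smul, hζ]
  · exact transferFunction_apply_eq (hu (hz i).le) (hV i)

theorem exists_unitary_interpolant [Finite ι] [FiniteDimensional ℂ U] [CompleteSpace U]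
    {b c : ι → U} {z : ι → ℂ} (hz : ∀ i, ‖z i‖ < 1) {P : Matrix ι ι ℂ} (hP : P.PosSemidef)
    (h : ∀ i j, inner ℂ (b i) (b j) - inner ℂ (c i) (c j) =
      (1 - starRingEnd ℂ (z i) * z j) * P i j) :
    ∃ Ψ : ℂ → U →L[ℂ] U, (∀ ζ, ‖ζ‖ ≤ 1 → DifferentiableAt ℂ Ψ ζ) ∧
      (∀ ζ, ‖ζ‖ = 1 → Ψ ζ ∈ unitary (U →L[ℂ] U)) ∧ ∀ i, Ψ (z i) (b i) = c i := by
  have := Fintype.ofFinite ι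
  obtain ⟨u, rfl⟩ := exists_eq_gram_of_posSemidef hP
  exact exists_unitary_interpolant_of_span_eq_top
    (a := fun i => (⟨u i, Submodule.subset_span ⟨i, rfl⟩⟩ : Submodule.span ℂ (Set.range u)))
    ((Submodule.span_range_subtype_eq_top_iff _ _).2 rfl) hz h

end UnitaryInterpolation

section Realization

variable {ι κ : Type*} [Fintype κ]

/-- The linear map sending `z` to the operator of multiplication by `z k` on the `k`-th summand of
`⨁ₖ ℂ^ι`, which is encoded as `EuclideanSpace ℂ (κ × ι)`. -/
noncomputable def blockDiagonalCLM (κ ι : Type*) [Fintype κ] [Fintype ι] [DecidableEq κ]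
    [DecidableEq ι] :
    (κ → ℂ) →L[ℂ] EuclideanSpace ℂ (κ × ι) →L[ℂ] EuclideanSpace ℂ (κ × ι) :=
  ((toEuclideanCLM (n := κ × ι) (𝕜 := ℂ)).toAlgEquiv.toLinearMap ∘ₗ
    diagonalLinearMap (κ × ι) ℂ ℂ ∘ₗ LinearMap.funLeft ℂ ℂ Prod.fst).toContinuousLinearMap

theorem blockDiagonalCLM_apply_apply [Fintype ι] [DecidableEq κ] [DecidableEq ι]
    (z : κ → ℂ) (a : EuclideanSpace ℂ (κ × ι)) (p : κ × ι) :
    blockDiagonalCLM κ ι z a p = z p.1 * a p :=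
  mulVec_diagonal _ _ _

theorem norm_blockDiagonalCLM_apply_lt [Fintype ι] [DecidableEq κ] [DecidableEq ι]
    {z : κ → ℂ} (hz : ∀ k, ‖z k‖ < 1)
    {a : EuclideanSpace ℂ (κ × ι)} (ha : a ≠ 0) : ‖blockDiagonalCLM κ ι z a‖ < ‖a‖ := by
  have hnorm : ‖blockDiagonalCLM κ ι z‖ < 1 :=
    (l2_opNorm_diagonal (𝕜 := ℂ) fun p : κ × ι => z p.1).trans_lt <|
      (pi_norm_lt_iff one_pos).2 fun p => hz p.1
  exact ((blockDiagonalCLM κ ι z).le_opNorm a).trans_lt <|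
    mul_lt_of_lt_one_left (norm_pos_iff.2 ha) hnorm

theorem exists_interpolant_of_colligation {τ : Type*} [Fintype ι] [DecidableEq κ] [DecidableEq ι]
    {V : WithLp 2 (EuclideanSpace ℂ (κ × ι) × ℂ) →ₗᵢ[ℂ] WithLp 2 (EuclideanSpace ℂ (κ × ι) × ℂ)}
    {x : τ → κ → ℂ} (hx : ∀ i k, ‖x i k‖ < 1) {w : τ → ℂ} {a : τ → EuclideanSpace ℂ (κ × ι)}
    (hV : ∀ i, V (WithLp.toLp 2 (blockDiagonalCLM κ ι (x i) (a i), 1)) =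
      WithLp.toLp 2 (a i, w i)) :
    ∃ φ : (κ → ℂ) → ℂ, (∀ z, (∀ k, ‖z k‖ < 1) → DifferentiableAt ℂ φ z) ∧
      (∀ z, (∀ k, ‖z k‖ < 1) → ‖φ z‖ ≤ 1) ∧ ∀ i, φ (x i) = w i := by
  have hunit {z : κ → ℂ} (hz : ∀ k, ‖z k‖ < 1) :
      IsUnit (feedbackOperator V (blockDiagonalCLM κ ι z)) :=
    isUnit_feedbackOperator_of_norm_lt fun _ => norm_blockDiagonalCLM_apply_lt hz
  refine ⟨fun z => transferFunction V (blockDiagonalCLM κ ι z) 1, fun z hz => ?_, fun z hz => ?_,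
    fun i => transferFunction_apply_eq (hunit (hx i)) (hV i)⟩
  · exact (differentiableAt_transferFunction (blockDiagonalCLM κ ι).differentiableAt
      (hunit hz)).clm_apply (differentiableAt_const 1)
  · refine (norm_transferFunction_apply_le (hunit hz) (fun s => ?_) 1).trans_eq norm_one
    obtain rfl | hs := eq_or_ne s 0
    · simp
    · exact (norm_blockDiagonalCLM_apply_lt hz hs).le

theorem exists_interpolant_of_eq_sum [Finite ι] {x : ι → κ → ℂ} (hx : ∀ i k, ‖x i k‖ < 1)
    {w : ι → ℂ} {Γ : κ → Matrix ι ι ℂ} (hΓ : ∀ k, (Γ k).PosSemidef)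
    (h : ∀ i j, 1 - w i * starRingEnd ℂ (w j) =
      ∑ k, (1 - x i k * starRingEnd ℂ (x j k)) * Γ k i j) :
    ∃ φ : (κ → ℂ) → ℂ, (∀ z, (∀ k, ‖z k‖ < 1) → DifferentiableAt ℂ φ z) ∧
      (∀ z, (∀ k, ‖z k‖ < 1) → ‖φ z‖ ≤ 1) ∧ ∀ i, φ (x i) = w i := by
  classical
  have := Fintype.ofFinite ι
  choose u hu using fun k => exists_eq_gram_of_posSemidef (hΓ k).transpose
  have hΓu (k i j) : Γ k i j = inner ℂ (u k j) (u k i) := congr_fun₂ (hu k) j i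
  let a (i : ι) : EuclideanSpace ℂ (κ × ι) := WithLp.toLp 2 fun p => u p.1 i p.2
  have hinner (i j) : inner ℂ (a i) (a j) = ∑ k, Γ k j i := by
    simp only [hΓu, PiLp.inner_apply, a, Fintype.sum_prod_type]
  have hinner' (i j) : inner ℂ (blockDiagonalCLM κ ι (x i) (a i))
      (blockDiagonalCLM κ ι (x j) (a j)) =
        ∑ k, x j k * starRingEnd ℂ (x i k) * Γ k j i := by
    simp only [hΓu, PiLp.inner_apply, RCLike.inner_apply, a, blockDiagonalCLM_apply_apply,
      Fintype.sum_prod_type, Finset.mul_sum, map_mul, mul_mul_mul_comm]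
  obtain ⟨V, hV⟩ := exists_colligation (a := fun i => blockDiagonalCLM κ ι (x i) (a i)) (a' := a)
    (b := fun _ => (1 : ℂ)) (b' := w) fun i j => by
      have hij := h j i
      simp only [sub_mul, one_mul, Finset.sum_sub_distrib] at hij
      rw [hinner, hinner', RCLike.inner_apply, RCLike.inner_apply, map_one]
      linear_combination hij
  exact exists_interpolant_of_colligation hx hV

end Realization

section CircleAverage

variable {ι : Type*} [Finite ι]

open Real (circleAverage)

open scoped Matrix.Norms.L2Operator MatrixOrder in
theorem posSemidef_circleAverage {M : ℂ → Matrix ι ι ℂ} {c : ℂ} {R : ℝ}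
    (hcont : ContinuousOn M (Metric.sphere c |R|))
    (hM : ∀ ζ ∈ Metric.sphere c |R|, (M ζ).PosSemidef) :
    (Matrix.of fun i j => circleAverage (fun ζ => M ζ i j) c R).PosSemidef := by
  classical
  have := Fintype.ofFinite ι
  have hint : CircleIntegrable M c R := hcont.circleIntegrable'
  have hentry : (Matrix.of fun i j => circleAverage (fun ζ => M ζ i j) c R) =
      circleAverage M c R := by
    ext i j
    exact (entryLinearMap ℝ ℂ i j).toContinuousLinearMap.circleAverage_comp_comm hint
  rw [hentry, ← nonneg_iff_posSemidef, Real.circleAverage_def]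
  refine smul_nonneg (by positivity) ?_
  rw [intervalIntegral.integral_of_le Real.two_pi_pos.le]
  exact MeasureTheory.integral_nonneg fun θ => (hM _ (circleMap_mem_sphere' c R θ)).nonneg

theorem continuousOn_conj_inv_sub_mul {a b : ℂ} (ha : ‖a‖ < 1) (hb : ‖b‖ < 1) {k : ℂ → ℂ}
    (hk : DiffContOnCl ℂ k (Metric.ball 0 1)) :
    ContinuousOn (fun ζ => starRingEnd ℂ (ζ - a)⁻¹ * (ζ - b)⁻¹ * k ζ) (Metric.sphere 0 1) := by
  have hinv {a : ℂ} (ha : ‖a‖ < 1) : ContinuousOn (fun ζ => (ζ - a)⁻¹) (Metric.sphere 0 1) :=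
    (continuousOn_id.sub continuousOn_const).inv₀ fun ζ hζ h0 =>
      ha.ne (by simpa [← sub_eq_zero.1 h0] using hζ)
  refine ((Complex.continuous_conj.comp_continuousOn (hinv ha)).mul (hinv hb)).mul
    (hk.continuousOn.mono ?_)
  simp [closure_ball, Metric.sphere_subset_closedBall]

theorem circleAverage_conj_inv_sub_mul {a b : ℂ} (ha : ‖a‖ < 1) (hb : ‖b‖ < 1) {k : ℂ → ℂ}
    (hk : DiffContOnCl ℂ k (Metric.ball 0 1)) :
    circleAverage (fun ζ => starRingEnd ℂ (ζ - a)⁻¹ * (ζ - b)⁻¹ * k ζ) 0 1 =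
      k b / (1 - starRingEnd ℂ a * b) := by
  have hquot : DiffContOnCl ℂ (fun ζ => k ζ / (1 - starRingEnd ℂ a * ζ)) (Metric.ball 0 1) := by
    simp only [div_eq_inv_mul]
    refine DiffContOnCl.smul (DiffContOnCl.inv ?_ fun ζ hζ =>
      one_sub_conj_mul_ne_zero ha ?_) hk
    · exact Differentiable.diffContOnCl (by fun_prop)
    · simpa [closure_ball] using hζ
  rw [← abs_one (α := ℝ)] at hquot
  refine .trans ?_ (hquot.circleAverage_smul_div (w := b) (by simpa using hb))
  refine Real.circleAverage_congr_sphere fun ζ hζ => ?_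
  have hζ1 : ‖ζ‖ = 1 := by simpa using hζ
  have hζ0 : ζ ≠ 0 := norm_ne_zero_iff.1 (by simp [hζ1])
  have hconj : starRingEnd ℂ (ζ - a) = (1 - starRingEnd ℂ a * ζ) / ζ := by
    rw [eq_div_iff hζ0, map_sub, sub_mul, Complex.conj_mul', hζ1]
    simp
  simp only [map_inv₀, hconj, smul_eq_mul, sub_zero]
  field_simp

theorem circleAverage_conj_inv_sub_mul_conj {a b : ℂ} (ha : ‖a‖ < 1) (hb : ‖b‖ < 1) {k : ℂ → ℂ}
    (hk : DiffContOnCl ℂ k (Metric.ball 0 1)) :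
    circleAverage (fun ζ => starRingEnd ℂ (ζ - a)⁻¹ * (ζ - b)⁻¹ * starRingEnd ℂ (k ζ)) 0 1 =
      starRingEnd ℂ (k a) / (1 - starRingEnd ℂ a * b) := by
  have hint : CircleIntegrable (fun ζ => starRingEnd ℂ (ζ - b)⁻¹ * (ζ - a)⁻¹ * k ζ) 0 1 :=
    (continuousOn_conj_inv_sub_mul hb ha hk).circleIntegrable zero_le_one
  have h := Complex.conjCLE.toContinuousLinearMap.circleAverage_comp_comm hint
  rw [circleAverage_conj_inv_sub_mul hb ha hk] at h
  convert h using 2 <;>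
    simp [Function.comp_def, mul_comm]

theorem posSemidef_of_posSemidef_sphere {z : ι → ℂ} (hz : ∀ i, ‖z i‖ < 1) {k : ι → ι → ℂ → ℂ}
    (hk : ∀ i j, DiffContOnCl ℂ (k i j) (Metric.ball 0 1))
    (hpos : ∀ ζ : ℂ, ‖ζ‖ = 1 → (Matrix.of fun i j =>
      starRingEnd ℂ (ζ - z i)⁻¹ * (ζ - z j)⁻¹ *
        (k i j ζ + starRingEnd ℂ (k j i ζ))).PosSemidef) :
    (Matrix.of fun i j => (k i j (z j) + starRingEnd ℂ (k j i (z i))) /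
      (1 - starRingEnd ℂ (z i) * z j)).PosSemidef := by
  have hcont (i j : ι) := continuousOn_conj_inv_sub_mul (hz i) (hz j) (hk i j)
  have hcont_conj (i j : ι) : ContinuousOn (fun ζ => starRingEnd ℂ (ζ - z i)⁻¹ * (ζ - z j)⁻¹ *
      starRingEnd ℂ (k j i ζ)) (Metric.sphere 0 1) :=
    (Complex.continuous_conj.comp_continuousOn (hcont j i)).congr fun ζ _ => by
      simp [mul_comm]
  convert posSemidef_circleAverage (c := 0) (R := 1) (M := fun ζ => Matrix.of fun i j =>
      starRingEnd ℂ (ζ - z i)⁻¹ * (ζ - z j)⁻¹ * (k i j ζ + starRingEnd ℂ (k j i ζ)))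
    (continuousOn_pi.2 fun i => continuousOn_pi.2 fun j => ?_)
    fun ζ hζ => hpos ζ (by simpa using hζ) using 1
  · ext i j
    simp only [Matrix.of_apply, mul_add]
    rw [Real.circleAverage_fun_add ((hcont i j).circleIntegrable zero_le_one)
      ((hcont_conj i j).circleIntegrable zero_le_one),
      circleAverage_conj_inv_sub_mul (hz i) (hz j) (hk i j),
      circleAverage_conj_inv_sub_mul_conj (hz i) (hz j) (hk j i), add_div]
  · simpa only [abs_one, Matrix.of_apply, mul_add] using! (hcont i j).add (hcont_conj i j)

end CircleAverage

section TangentialPick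

variable {𝕜 E F ι : Type*} [RCLike 𝕜] [NormedAddCommGroup E] [InnerProductSpace 𝕜 E]
  [NormedAddCommGroup F] [InnerProductSpace 𝕜 F] [Finite ι] {C : ℝ}

theorem posSemidef_sq_smul_gram_sub_gram {f : E →L[𝕜] F} (hf : ‖f‖ ≤ C) (v : ι → E) :
    ((C : 𝕜) ^ 2 • gram 𝕜 v - gram 𝕜 fun i => f (v i)).PosSemidef := by
  have := Fintype.ofFinite ι
  have hherm : ((C : 𝕜) ^ 2 • gram 𝕜 v - gram 𝕜 fun i => f (v i)).IsHermitian :=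
    ((isHermitian_gram 𝕜 v).smul (by simp [IsSelfAdjoint])).sub (isHermitian_gram 𝕜 _)
  refine .of_dotProduct_mulVec_nonneg hherm fun x => ?_
  have hmap : ∑ i, x i • f (v i) = f (∑ i, x i • v i) := by simp
  rw [sub_mulVec, smul_mulVec, dotProduct_sub, dotProduct_smul, star_dotProduct_gram_mulVec,
    star_dotProduct_gram_mulVec, hmap, inner_self_eq_norm_sq_to_K, inner_self_eq_norm_sq_to_K,
    smul_eq_mul, ← mul_pow, sub_nonneg]
  have : ‖f (∑ i, x i • v i)‖ ≤ C * ‖∑ i, x i • v i‖ := f.le_of_opNorm_le hf _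
  exact_mod_cast pow_le_pow_left₀ (norm_nonneg _) this 2

theorem posSemidef_sq_smul_gram_add_gram_sub_inner {f : E →L[𝕜] F} (hf : ‖f‖ ≤ C) (g : ι → E)
    (h : ι → F) :
    (Matrix.of fun i j => (C : 𝕜) ^ 2 * inner 𝕜 (g i) (g j) + inner 𝕜 (h i) (h j) -
      inner 𝕜 (h i) (f (g j)) - inner 𝕜 (f (g i)) (h j)).PosSemidef := by
  convert (posSemidef_gram 𝕜 fun i => h i - f (g i)).add (posSemidef_sq_smul_gram_sub_gram hf g)
    using 1
  ext i j
  simp only [Matrix.of_apply, Matrix.add_apply, Matrix.sub_apply, Matrix.smul_apply, gram_apply,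
    inner_sub_left, inner_sub_right, smul_eq_mul]
  ring

end TangentialPick

theorem posSemidef_pick_of_norm_le {E F ι : Type*} [NormedAddCommGroup E] [InnerProductSpace ℂ E]
    [NormedAddCommGroup F] [InnerProductSpace ℂ F] [Finite ι] {C : ℝ} {z : ι → ℂ}
    (hz : ∀ i, ‖z i‖ < 1) {Φ : ℂ → E →L[ℂ] F} (hΦ : DiffContOnCl ℂ Φ (Metric.ball 0 1))
    (hC : ∀ ζ, ‖ζ‖ = 1 → ‖Φ ζ‖ ≤ C) (b : ι → E) :
    (Matrix.of fun i j => ((C : ℂ) ^ 2 * inner ℂ (b i) (b j) -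
      inner ℂ (Φ (z i) (b i)) (Φ (z j) (b j))) / (1 - starRingEnd ℂ (z i) * z j)).PosSemidef := by
  let c (i : ι) : F := Φ (z i) (b i)
  -- `k i j` is analytic and `k i j + conj (k j i)` has the Gram form of
  -- `posSemidef_sq_smul_gram_add_gram_sub_inner`; at the nodes it is the Pick numerator.
  let k (i j : ι) (ζ : ℂ) : ℂ :=
    ((C : ℂ) ^ 2 * inner ℂ (b i) (b j) + inner ℂ (c i) (c j)) / 2 - inner ℂ (c i) (Φ ζ (b j))
  have hk (i j : ι) : DiffContOnCl ℂ (k i j) (Metric.ball 0 1) := by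
    let L : (E →L[ℂ] F) →L[ℂ] ℂ := (innerSL ℂ (c i)).comp (ContinuousLinearMap.apply ℂ F (b j))
    exact (L.differentiable.comp_diffContOnCl hΦ).const_sub _
  have hconj (i j : ι) (ζ : ℂ) : starRingEnd ℂ (k j i ζ) =
      ((C : ℂ) ^ 2 * inner ℂ (b i) (b j) + inner ℂ (c i) (c j)) / 2 -
        inner ℂ (Φ ζ (b i)) (c j) := by
    simp [k, Complex.conj_ofNat]
  convert posSemidef_of_posSemidef_sphere hz hk fun ζ hζ => ?_ using 1
  · ext i j
    simp only [Matrix.of_apply, hconj, k]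
    ring
  · refine (congr_arg Matrix.PosSemidef (Matrix.ext fun i j => ?_)).mp <|
      posSemidef_sq_smul_gram_add_gram_sub_inner (hC ζ hζ) (fun i => (ζ - z i)⁻¹ • b i)
        (fun i => (ζ - z i)⁻¹ • c i)
    simp only [Matrix.of_apply, hconj, k, map_smul, inner_smul_left, inner_smul_right,
      Complex.coe_algebraMap]
    ring

section RootsOfUnityInterpolation

open Polynomial

theorem interpolate_nthRootsFinset_pow {K : Type*} [Field K] [DecidableEq K] {n : ℕ} {ζ : K}
    (hζ : IsPrimitiveRoot ζ n) (hn : 0 < n) (k : ℕ) :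
    Lagrange.interpolate (nthRootsFinset n (1 : K)) id (· ^ k) = X ^ (k % n) := by
  refine (Lagrange.eq_interpolate_of_eval_eq _ Function.injective_id.injOn ?_ fun y hy => ?_).symm
  · rw [degree_X_pow, hζ.card_nthRootsFinset]
    exact_mod_cast Nat.mod_lt k hn
  · rw [eval_X_pow, id, ← pow_eq_pow_mod k ((mem_nthRootsFinset hn 1).1 hy)]

theorem hasSum_eval_interpolate_nthRootsFinset {K : Type*} [Field K] [DecidableEq K]
    [TopologicalSpace K] [IsTopologicalSemiring K] {n : ℕ} {ζ : K} (hζ : IsPrimitiveRoot ζ n)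
    (hn : 0 < n) {f : K → K} {c : ℕ → K}
    (h : ∀ y ∈ nthRootsFinset n (1 : K), HasSum (fun k => c k * y ^ k) (f y)) (x : K) :
    HasSum (fun k => c k * x ^ (k % n))
      ((Lagrange.interpolate (nthRootsFinset n (1 : K)) id f).eval x) := by
  have heval (g : K → K) : (Lagrange.interpolate (nthRootsFinset n (1 : K)) id g).eval x =
      ∑ y ∈ nthRootsFinset n (1 : K),
        g y * (Lagrange.basis (nthRootsFinset n (1 : K)) id y).eval x := by
    simp [Lagrange.interpolate_apply, eval_finsetSum]
  rw [heval]
  refine (hasSum_sum fun y hy => (h y hy).mul_right _).congr_fun fun k => ?_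
  rw [← eval_X_pow, ← interpolate_nthRootsFinset_pow hζ hn, heval, Finset.mul_sum]
  exact Finset.sum_congr rfl fun y _ => (mul_assoc _ _ _).symm

theorem exists_hasSum_mul_pow_of_norm_le {f : ℂ → ℂ} {r C : ℝ} (hr : 0 < r)
    (hf : DiffContOnCl ℂ f (Metric.ball 0 r)) (hC : ∀ y ∈ Metric.sphere 0 r, ‖f y‖ ≤ C) :
    ∃ c : ℕ → ℂ, (∀ n, ‖c n‖ ≤ C * r⁻¹ ^ n) ∧
      ∀ y ∈ Metric.ball 0 r, HasSum (fun n => c n * y ^ n) (f y) := by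
  refine ⟨fun n => (n.factorial : ℂ)⁻¹ * iteratedDeriv n f 0, fun n => ?_, fun y hy => ?_⟩
  · have hfac : (0 : ℝ) < n.factorial := by positivity
    rw [norm_mul, norm_inv, Complex.norm_natCast, inv_mul_le_iff₀ hfac, inv_pow, ← div_eq_mul_inv,
      ← mul_div_assoc]
    exact Complex.norm_iteratedDeriv_le_of_forall_mem_sphere_norm_le n hr hf hC
  · refine (Complex.hasSum_taylorSeries_on_ball hf.differentiableOn hy).congr_fun fun n => ?_
    simp only [smul_eq_mul, sub_zero]
    ring

theorem norm_eval_interpolate_nthRootsFinset_sub_le {f : ℂ → ℂ} {r C : ℝ} (hr : 1 < r)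
    (hf : DiffContOnCl ℂ f (Metric.ball 0 r)) (hC : ∀ y ∈ Metric.sphere 0 r, ‖f y‖ ≤ C) {n : ℕ}
    (hn : 0 < n) {x : ℂ} (hx : ‖x‖ ≤ 1) :
    ‖(Lagrange.interpolate (nthRootsFinset n (1 : ℂ)) id f).eval x - f x‖ ≤
      2 * C * (1 - r⁻¹)⁻¹ * r⁻¹ ^ n := by
  obtain ⟨c, hc, hsum⟩ := exists_hasSum_mul_pow_of_norm_le (one_pos.trans hr) hf hC
  have hsum_closedBall {y : ℂ} (hy : ‖y‖ ≤ 1) : HasSum (fun k => c k * y ^ k) (f y) :=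
    hsum y (by simpa using hy.trans_lt hr)
  have halias := hasSum_eval_interpolate_nthRootsFinset (Complex.isPrimitiveRoot_exp n hn.ne') hn
    (fun y hy => hsum_closedBall
      (Complex.norm_eq_one_of_pow_eq_one ((mem_nthRootsFinset hn 1).1 hy) hn.ne').le) x
  have htail := (hasSum_nat_add_iff' n).2 (halias.sub (hsum_closedBall hx))
  rw [Finset.sum_eq_zero fun k hk => by rw [Nat.mod_eq_of_lt (Finset.mem_range.1 hk), sub_self],
    sub_zero] at htail
  have hgeom : HasSum (fun k => 2 * C * r⁻¹ ^ n * r⁻¹ ^ k) (2 * C * r⁻¹ ^ n * (1 - r⁻¹)⁻¹) :=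
    (hasSum_geometric_of_lt_one (by positivity) (inv_lt_one_of_one_lt₀ hr)).mul_left _
  rw [mul_right_comm]
  refine htail.norm_le_of_bounded hgeom fun k => ?_
  have hpow (m : ℕ) : ‖x ^ m‖ ≤ 1 := norm_pow x m ▸ pow_le_one₀ (norm_nonneg _) hx
  calc ‖c (k + n) * x ^ ((k + n) % n) - c (k + n) * x ^ (k + n)‖
      = ‖c (k + n)‖ * ‖x ^ ((k + n) % n) - x ^ (k + n)‖ := by rw [← mul_sub, norm_mul]
    _ ≤ C * r⁻¹ ^ (k + n) * (1 + 1) := by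
      gcongr
      · exact (norm_nonneg _).trans (hc _)
      · exact hc _
      · exact (norm_sub_le _ _).trans (add_le_add (hpow _) (hpow _))
    _ = 2 * C * r⁻¹ ^ n * r⁻¹ ^ k := by ring

end RootsOfUnityInterpolation

section Ando

variable {ι : Type*} [Finite ι] {z x : ι → ℂ} {R : Matrix ι ι ℂ} {C : ℝ}

open Polynomial Filter Topology

theorem differentiableAt_aeval_comp {𝕜 E A : Type*} [NontriviallyNormedField 𝕜]
    [NormedAddCommGroup E] [NormedSpace 𝕜 E] [NormedRing A] [NormedAlgebra 𝕜 A] {g : E → A} {e : E}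
    (hg : DifferentiableAt 𝕜 g e) (p : 𝕜[X]) : DifferentiableAt 𝕜 (fun e => aeval (g e) p) e := by
  simp only [aeval_eq_sum_range]
  exact DifferentiableAt.fun_sum fun n _ => (hg.fun_pow n).const_smul (p.coeff n)

theorem aeval_apply_of_apply_eq_smul {𝕜 E : Type*} [Field 𝕜] [TopologicalSpace 𝕜]
    [TopologicalSpace E] [AddCommGroup E] [IsTopologicalAddGroup E] [Module 𝕜 E]
    [ContinuousConstSMul 𝕜 E] {T : E →L[𝕜] E} {μ : 𝕜} {e : E} (h : T e = μ • e) (p : 𝕜[X]) :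
    aeval T p e = p.eval μ • e := by
  let φ : (E →L[𝕜] E) →ₐ[𝕜] Module.End 𝕜 E :=
    { ContinuousLinearMap.toLinearMapRingHom with commutes' _ := rfl }
  have hφ : φ (aeval T p) e = aeval (φ T) p e := by rw [aeval_algHom_apply]
  exact hφ.trans (Module.End.aeval_apply_of_mem_apply_eq_smul h)

theorem norm_aeval_le_of_mem_unitary {A : Type*} [CStarAlgebra A] {U : A} (hU : U ∈ unitary A)
    {p : ℂ[X]} {C : ℝ} (hp : ∀ y : ℂ, ‖y‖ = 1 → ‖p.eval y‖ ≤ C) : ‖aeval U p‖ ≤ C := by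
  have hC : 0 ≤ C := (norm_nonneg _).trans (hp 1 norm_one)
  rw [← cfc_polynomial p U (isStarNormal_of_mem_unitary hU)]
  exact norm_cfc_le hC fun y hy => hp y (by simpa using spectrum.subset_circle_of_unitary hU hy)

theorem posSemidef_sq_sub_mul_of_sum_eval {τ : Type*} {s : Finset τ} (hz : ∀ i, ‖z i‖ < 1)
    (hRz : (Matrix.of fun i j => (1 - starRingEnd ℂ (z i) * z j) * R i j).PosSemidef)
    (hRx : (Matrix.of fun i j => (1 - starRingEnd ℂ (x i) * x j) * R i j).PosSemidef)
    {c : τ → ℂ → ℂ} (hc : ∀ m ∈ s, DiffContOnCl ℂ (c m) (Metric.ball 0 1)) {q : τ → ℂ[X]}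
    (hC : ∀ ζ y, ‖ζ‖ = 1 → ‖y‖ = 1 → ‖∑ m ∈ s, c m ζ * (q m).eval y‖ ≤ C) :
    (Matrix.of fun i j => ((C : ℂ) ^ 2 -
      starRingEnd ℂ (∑ m ∈ s, c m (z i) * (q m).eval (x i)) *
        ∑ m ∈ s, c m (z j) * (q m).eval (x j)) * R i j).PosSemidef := by
  have := Fintype.ofFinite ι
  obtain ⟨b, hb⟩ := exists_eq_gram_of_posSemidef hRz
  have hb_inner (i j : ι) : inner ℂ (b i) (b j) = (1 - starRingEnd ℂ (z i) * z j) * R i j :=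
    (congr_fun₂ hb i j).symm
  obtain ⟨Ψ, hΨ, hunitary, hΨb⟩ := exists_unitary_interpolant (b := b) (c := fun i => x i • b i)
    hz hRx fun i j => by
      rw [inner_smul_left, inner_smul_right, hb_inner, Matrix.of_apply]
      ring
  let Φ (ζ : ℂ) : EuclideanSpace ℂ ι →L[ℂ] EuclideanSpace ℂ ι :=
    ∑ m ∈ s, c m ζ • aeval (Ψ ζ) (q m)
  have hΦ : DiffContOnCl ℂ Φ (Metric.ball 0 1) := by
    have hΨq (m : τ) : DiffContOnCl ℂ (fun ζ => aeval (Ψ ζ) (q m)) (Metric.ball 0 1) :=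
      DifferentiableOn.diffContOnCl fun ζ hζ =>
        (differentiableAt_aeval_comp (hΨ ζ (by simpa [closure_ball] using hζ))
          (q m)).differentiableWithinAt
    refine ⟨DifferentiableOn.fun_sum fun m hm => ((hc m hm).smul (hΨq m)).differentiableOn,
      continuousOn_finsetSum _ fun m hm => ((hc m hm).smul (hΨq m)).continuousOn⟩
  have hΦC (ζ : ℂ) (hζ : ‖ζ‖ = 1) : ‖Φ ζ‖ ≤ C := by
    have hΦp : Φ ζ = aeval (Ψ ζ) (∑ m ∈ s, Polynomial.C (c m ζ) * q m) := by
      simp [Φ, Algebra.smul_def]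
    rw [hΦp]
    refine norm_aeval_le_of_mem_unitary (hunitary ζ hζ) fun y hy => ?_
    simpa [eval_finsetSum] using hC ζ y hζ hy
  have hΦb (i : ι) : Φ (z i) (b i) = (∑ m ∈ s, c m (z i) * (q m).eval (x i)) • b i := by
    simp [Φ, aeval_apply_of_apply_eq_smul (hΨb i), smul_smul, Finset.sum_smul]
  convert posSemidef_pick_of_norm_le hz hΦ hΦC b using 1
  ext i j
  simp only [Matrix.of_apply, hΦb, inner_smul_left, inner_smul_right, hb_inner]
  have := one_sub_conj_mul_ne_zero (hz i) (hz j).le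
  field_simp

theorem posSemidef_sq_sub_mul_of_tendsto {α : Type*} {l : Filter α} [l.NeBot] {B : α → ℝ}
    {u : α → ι → ℂ} {v : ι → ℂ} (hB : Tendsto B l (𝓝 C)) (hu : ∀ i, Tendsto (u · i) l (𝓝 (v i)))
    (h : ∀ᶠ a in l, (Matrix.of fun i j =>
      ((B a : ℂ) ^ 2 - starRingEnd ℂ (u a i) * u a j) * R i j).PosSemidef) :
    (Matrix.of fun i j => ((C : ℂ) ^ 2 - starRingEnd ℂ (v i) * v j) * R i j).PosSemidef := by
  refine isClosed_setOf_posSemidef.mem_of_tendsto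
    (tendsto_pi_nhds.2 fun i => tendsto_pi_nhds.2 fun j => ?_) h
  have hB' : Tendsto (fun a => (B a : ℂ)) l (𝓝 C) := (Complex.continuous_ofReal.tendsto C).comp hB
  have hu' : Tendsto (fun a => starRingEnd ℂ (u a i)) l (𝓝 (starRingEnd ℂ (v i))) :=
    (Complex.continuous_conj.tendsto _).comp (hu i)
  exact ((hB'.pow 2).sub (hu'.mul (hu j))).mul_const _

theorem posSemidef_sq_sub_mul_of_diffContOnCl (hz : ∀ i, ‖z i‖ < 1) (hx : ∀ i, ‖x i‖ ≤ 1)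
    (hRz : (Matrix.of fun i j => (1 - starRingEnd ℂ (z i) * z j) * R i j).PosSemidef)
    (hRx : (Matrix.of fun i j => (1 - starRingEnd ℂ (x i) * x j) * R i j).PosSemidef)
    {f : ℂ → ℂ → ℂ} {r : ℝ} (hr : 1 < r)
    (hf_left : ∀ y, ‖y‖ = 1 → DiffContOnCl ℂ (f · y) (Metric.ball 0 1))
    (hf_right : ∀ ζ, ‖ζ‖ ≤ 1 → DiffContOnCl ℂ (f ζ) (Metric.ball 0 r))
    (hC : ∀ ζ y, ‖ζ‖ ≤ 1 → ‖y‖ ≤ r → ‖f ζ y‖ ≤ C) :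
    (Matrix.of fun i j => ((C : ℂ) ^ 2 -
      starRingEnd ℂ (f (z i) (x i)) * f (z j) (x j)) * R i j).PosSemidef := by
  let p (n : ℕ) (ζ y : ℂ) : ℂ :=
    (Lagrange.interpolate (nthRootsFinset n (1 : ℂ)) id (f ζ)).eval y
  let ε (n : ℕ) : ℝ := 2 * C * (1 - r⁻¹)⁻¹ * r⁻¹ ^ n
  have hε : Tendsto ε atTop (𝓝 0) := by
    simpa only [mul_zero] using (tendsto_pow_atTop_nhds_zero_of_lt_one (by positivity)
      (inv_lt_one_of_one_lt₀ hr)).const_mul (2 * C * (1 - r⁻¹)⁻¹)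
  have hpf {n : ℕ} (hn : 0 < n) {ζ y : ℂ} (hζ : ‖ζ‖ ≤ 1) (hy : ‖y‖ ≤ 1) :
      ‖p n ζ y - f ζ y‖ ≤ ε n :=
    norm_eval_interpolate_nthRootsFinset_sub_le hr (hf_right ζ hζ)
      (fun y hy => hC ζ y hζ (mem_sphere_zero_iff_norm.1 hy).le) hn hy
  refine posSemidef_sq_sub_mul_of_tendsto (l := atTop) (B := fun n => C + ε n)
    (u := fun n i => p n (z i) (x i)) (by simpa using hε.const_add C) (fun i => ?_) ?_
  · refine tendsto_iff_norm_sub_tendsto_zero.2 <| squeeze_zero' (.of_forall fun _ => norm_nonneg _)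
      ?_ hε
    filter_upwards [eventually_gt_atTop 0] with n hn using hpf hn (hz i).le (hx i)
  · filter_upwards [eventually_gt_atTop 0] with n hn
    have hp_sum (ζ y : ℂ) : p n ζ y = ∑ m ∈ nthRootsFinset n (1 : ℂ),
        f ζ m * (Lagrange.basis (nthRootsFinset n (1 : ℂ)) id m).eval y := by
      simp [p, Lagrange.interpolate_apply, eval_finsetSum]
    have hp_le (ζ y : ℂ) (hζ : ‖ζ‖ = 1) (hy : ‖y‖ = 1) : ‖p n ζ y‖ ≤ C + ε n :=
      (norm_le_norm_add_norm_sub' _ (f ζ y)).trans <|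
        add_le_add (hC ζ y hζ.le (hy.le.trans hr.le)) (hpf hn hζ.le hy.le)
    simp only [hp_sum] at hp_le ⊢
    exact posSemidef_sq_sub_mul_of_sum_eval hz hRz hRx (fun m hm => hf_left m
      (Complex.norm_eq_one_of_pow_eq_one ((mem_nthRootsFinset hn 1).1 hm) hn.ne')) hp_le

end Ando

section PickMatrix

variable {ι : Type*}

/-- The Pick matrix `(1 - vᵢ v̄ⱼ)` of the unit disk; it serves for the nodes, one coordinate at a
time, as well as for the targets. -/
def pickMatrix (v : ι → ℂ) : Matrix ι ι ℂ :=
  .of fun i j => 1 - v i * starRingEnd ℂ (v j)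

theorem isHermitian_pickMatrix (v : ι → ℂ) : (pickMatrix v).IsHermitian := by
  ext i j
  simp [pickMatrix, mul_comm]

theorem pickMatrix_apply_self_pos {v : ι → ℂ} {i : ι} (hv : ‖v i‖ < 1) : 0 < pickMatrix v i i := by
  simp only [pickMatrix, of_apply, Complex.mul_conj']
  exact_mod_cast sub_pos.2 (pow_lt_one₀ (norm_nonneg _) hv two_ne_zero)

theorem transpose_pickMatrix_hadamard (v : ι → ℂ) (R : Matrix ι ι ℂ) :
    (pickMatrix v)ᵀ ⊙ R = .of fun i j => (1 - starRingEnd ℂ (v i) * v j) * R i j := by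
  ext i j
  simp [pickMatrix, mul_comm (v j)]

theorem re_trace_mul_nonneg_of_posSemidef_hadamard [Fintype ι] {A B : Matrix ι ι ℂ}
    (h : (Aᵀ ⊙ B).PosSemidef) : 0 ≤ (B * A).trace.re := by
  have hsum : (B * A).trace = star 1 ⬝ᵥ (Aᵀ ⊙ B) *ᵥ 1 := by
    simp [trace, Matrix.mul_apply, dotProduct, mulVec, mul_comm]
  exact hsum ▸ (Complex.nonneg_iff.1 (h.dotProduct_mulVec_nonneg 1)).1

end PickMatrix

section Bidisk

open Filter Topology

variable {ι : Type*} [Finite ι] {lam : ι → ℂ × ℂ}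

theorem isOpen_bidisk : IsOpen Bidisk :=
  (isOpen_lt continuous_fst.norm continuous_const).inter
    (isOpen_lt continuous_snd.norm continuous_const)

theorem smul_mem_bidisk {s : ℝ} (hs : 0 < s) {ζ y : ℂ} (hζ : ‖ζ‖ < s⁻¹) (hy : ‖y‖ < s⁻¹) :
    (s : ℂ) • (ζ, y) ∈ Bidisk := by
  have hmul {u : ℂ} (hu : ‖u‖ < s⁻¹) : ‖(s : ℂ) * u‖ < 1 := by
    rwa [norm_mul, Complex.norm_real, Real.norm_of_nonneg hs.le, ← lt_inv_mul_iff₀ hs, mul_one]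
  exact ⟨hmul hζ, hmul hy⟩

theorem posSemidef_sq_sub_mul_of_dilation {R : Matrix ι ι ℂ} (hlam : ∀ i, lam i ∈ Bidisk)
    (hR₁ : (Matrix.of fun i j =>
      (1 - starRingEnd ℂ (lam i).1 * (lam j).1) * R i j).PosSemidef)
    (hR₂ : (Matrix.of fun i j =>
      (1 - starRingEnd ℂ (lam i).2 * (lam j).2) * R i j).PosSemidef)
    {φ : ℂ × ℂ → ℂ} (hφ : DifferentiableOn ℂ φ Bidisk) {C : ℝ} (hC : ∀ z ∈ Bidisk, ‖φ z‖ ≤ C)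
    {s : ℝ} (hs₀ : 0 < s) (hs₁ : s < 1) :
    (Matrix.of fun i j => ((C : ℂ) ^ 2 -
      starRingEnd ℂ (φ ((s : ℂ) • lam i)) * φ ((s : ℂ) • lam j)) * R i j).PosSemidef := by
  have hs : 1 < s⁻¹ := (one_lt_inv₀ hs₀).2 hs₁
  obtain ⟨r, hr, hrs⟩ := exists_between hs
  have hdiff {ζ y : ℂ} (hζ : ‖ζ‖ < s⁻¹) (hy : ‖y‖ < s⁻¹) :
      DifferentiableAt ℂ φ ((s : ℂ) • (ζ, y)) :=
    hφ.differentiableAt (isOpen_bidisk.mem_nhds (smul_mem_bidisk hs₀ hζ hy))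
  refine posSemidef_sq_sub_mul_of_diffContOnCl (fun i => (hlam i).1) (fun i => (hlam i).2.le)
    hR₁ hR₂ (f := fun ζ y => φ ((s : ℂ) • (ζ, y))) hr (fun y hy => ?_) (fun ζ hζ => ?_)
    fun ζ y hζ hy => hC _ (smul_mem_bidisk hs₀ (hζ.trans_lt hs) (hy.trans_lt hrs))
  · refine DifferentiableOn.diffContOnCl fun ζ hζ => DifferentiableAt.differentiableWithinAt ?_
    have hζ : ‖ζ‖ ≤ 1 := by simpa [closure_ball] using hζ
    exact (hdiff (hζ.trans_lt hs) (hy.le.trans_lt hs)).comp ζ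
      (f := fun ζ => (s : ℂ) • (ζ, y)) (by fun_prop)
  · refine DifferentiableOn.diffContOnCl fun y hy => DifferentiableAt.differentiableWithinAt ?_
    have hy : ‖y‖ ≤ r := by simpa [closure_ball, (one_pos.trans hr).ne'] using hy
    exact (hdiff (hζ.trans_lt hs) (hy.trans_lt hrs)).comp y
      (f := fun y => (s : ℂ) • (ζ, y)) (by fun_prop)

theorem posSemidef_sq_sub_mul_of_differentiableOn_bidisk {R : Matrix ι ι ℂ}
    (hlam : ∀ i, lam i ∈ Bidisk)
    (hR₁ : (Matrix.of fun i j =>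
      (1 - starRingEnd ℂ (lam i).1 * (lam j).1) * R i j).PosSemidef)
    (hR₂ : (Matrix.of fun i j =>
      (1 - starRingEnd ℂ (lam i).2 * (lam j).2) * R i j).PosSemidef)
    {φ : ℂ × ℂ → ℂ} (hφ : DifferentiableOn ℂ φ Bidisk) {C : ℝ} (hC : ∀ z ∈ Bidisk, ‖φ z‖ ≤ C) :
    (Matrix.of fun i j => ((C : ℂ) ^ 2 -
      starRingEnd ℂ (φ (lam i)) * φ (lam j)) * R i j).PosSemidef := by
  refine posSemidef_sq_sub_mul_of_tendsto (l := 𝓝[<] (1 : ℝ)) (B := fun _ => C)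
    (u := fun s i => φ ((s : ℂ) • lam i)) tendsto_const_nhds (fun i => ?_) ?_
  · have hφi : ContinuousAt φ (lam i) :=
      (hφ.differentiableAt (isOpen_bidisk.mem_nhds (hlam i))).continuousAt
    have hsmul : Continuous fun s : ℝ => (s : ℂ) • lam i := by fun_prop
    exact (hφi.tendsto.comp (hsmul.tendsto' 1 _ (by simp))).mono_left nhdsWithin_le_nhds
  · filter_upwards [Ioo_mem_nhdsLT one_pos] with s hs
    exact posSemidef_sq_sub_mul_of_dilation hlam hR₁ hR₂ hφ hC hs.1 hs.2

theorem exists_agler_decomposition {w : ι → ℂ} (hlam : ∀ i, lam i ∈ Bidisk)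
    {φ : ℂ × ℂ → ℂ} (hφ : DifferentiableOn ℂ φ Bidisk) (hφ₁ : ∀ z ∈ Bidisk, ‖φ z‖ ≤ 1)
    (hw : ∀ i, φ (lam i) = w i) :
    ∃ Γ₁ Γ₂ : Matrix ι ι ℂ, Γ₁.PosSemidef ∧ Γ₂.PosSemidef ∧
      ∀ i j, 1 - w i * starRingEnd ℂ (w j) =
        (1 - (lam i).1 * starRingEnd ℂ ((lam j).1)) * Γ₁ i j +
        (1 - (lam i).2 * starRingEnd ℂ ((lam j).2)) * Γ₂ i j := by
  have := Fintype.ofFinite ι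
  have hdual (R : Matrix ι ι ℂ)
      (hR : ((pickMatrix fun i => (lam i).1)ᵀ ⊙ R).PosSemidef ∧
        ((pickMatrix fun i => (lam i).2)ᵀ ⊙ R).PosSemidef) : 0 ≤ (R * pickMatrix w).trace.re := by
    simp only [transpose_pickMatrix_hadamard] at hR
    refine re_trace_mul_nonneg_of_posSemidef_hadamard ?_
    simpa [transpose_pickMatrix_hadamard, hw] using
      posSemidef_sq_sub_mul_of_differentiableOn_bidisk hlam hR.1 hR.2 hφ hφ₁
  obtain ⟨Γ, hΓ, hsum⟩ := exists_posSemidef_eq_sum_hadamard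
    (A := ![pickMatrix fun i => (lam i).1, pickMatrix fun i => (lam i).2])
    (Fin.forall_fin_two.2 ⟨isHermitian_pickMatrix _, isHermitian_pickMatrix _⟩)
    (Fin.forall_fin_two.2 ⟨fun i => pickMatrix_apply_self_pos (hlam i).1,
      fun i => pickMatrix_apply_self_pos (hlam i).2⟩) (isHermitian_pickMatrix w)
    fun R hR => hdual R (Fin.forall_fin_two.1 hR)
  exact ⟨Γ 0, Γ 1, hΓ 0, hΓ 1, fun i j => by simpa [pickMatrix] using congr_fun₂ hsum i j⟩

theorem exists_interpolant_bidisk {w : ι → ℂ} (hlam : ∀ i, lam i ∈ Bidisk)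
    {Γ₁ Γ₂ : Matrix ι ι ℂ} (hΓ₁ : Γ₁.PosSemidef) (hΓ₂ : Γ₂.PosSemidef)
    (h : ∀ i j, 1 - w i * starRingEnd ℂ (w j) =
      (1 - (lam i).1 * starRingEnd ℂ ((lam j).1)) * Γ₁ i j +
      (1 - (lam i).2 * starRingEnd ℂ ((lam j).2)) * Γ₂ i j) :
    ∃ φ : ℂ × ℂ → ℂ, DifferentiableOn ℂ φ Bidisk ∧
      (∀ z ∈ Bidisk, ‖φ z‖ ≤ 1) ∧ ∀ i, φ (lam i) = w i := by
  obtain ⟨φ, hφ, hφ₁, hφw⟩ := exists_interpolant_of_eq_sum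
    (x := fun i => ![(lam i).1, (lam i).2]) (w := w) (Γ := ![Γ₁, Γ₂])
    (fun i => Fin.forall_fin_two.2 (hlam i)) (Fin.forall_fin_two.2 ⟨hΓ₁, hΓ₂⟩)
    (by simpa [Fin.sum_univ_two] using h)
  have hmem {z : ℂ × ℂ} (hz : z ∈ Bidisk) : ∀ k, ‖![z.1, z.2] k‖ < 1 := Fin.forall_fin_two.2 hz
  refine ⟨fun z => φ ![z.1, z.2], fun z hz => ?_, fun z hz => hφ₁ _ (hmem hz), hφw⟩
  have hpair : DifferentiableAt ℂ (fun z : ℂ × ℂ => ![z.1, z.2]) z :=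
    differentiableAt_pi.2 (Fin.forall_fin_two.2 ⟨differentiableAt_fst, differentiableAt_snd⟩)
  exact ((hφ _ (hmem hz)).comp z hpair).differentiableWithinAt

end Bidisk

theorem pick_theorem_bidisk_general {ι : Type*} [Finite ι] (lam : ι → ℂ × ℂ) (w : ι → ℂ)
    (hlam : ∀ i, lam i ∈ Bidisk) :
    (∃ φ : ℂ × ℂ → ℂ, DifferentiableOn ℂ φ Bidisk ∧
      (∀ z ∈ Bidisk, ‖φ z‖ ≤ 1) ∧ ∀ i, φ (lam i) = w i) ↔
    ∃ Γ₁ Γ₂ : Matrix ι ι ℂ, Γ₁.PosSemidef ∧ Γ₂.PosSemidef ∧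
      ∀ i j, 1 - w i * starRingEnd ℂ (w j) =
        (1 - (lam i).1 * starRingEnd ℂ ((lam j).1)) * Γ₁ i j +
        (1 - (lam i).2 * starRingEnd ℂ ((lam j).2)) * Γ₂ i j :=
  ⟨fun ⟨_, hφ, hφ₁, hw⟩ => exists_agler_decomposition hlam hφ hφ₁ hw,
    fun ⟨_, _, hΓ₁, hΓ₂, h⟩ => exists_interpolant_bidisk hlam hΓ₁ hΓ₂ h⟩

/-- **Pick interpolation on the bidisk (Agler).** Given points `λ₁, …, λ_N ∈ 𝔻²` and
targets `w₁, …, w_N ∈ ℂ`, there is an analytic `φ : 𝔻² → ℂ` with `sup_{𝔻²}|φ| ≤ 1` and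
`φ(λᵢ) = wᵢ` if and only if there exist positive semi-definite `N × N` matrices `Γ¹, Γ²`
with `1 - wᵢw̄ⱼ = (1 - λᵢ¹λ̄ⱼ¹) Γ¹ᵢⱼ + (1 - λᵢ²λ̄ⱼ²) Γ²ᵢⱼ` for all `i, j`. -/
theorem pick_theorem_bidisk {N : ℕ} (lam : Fin N → ℂ × ℂ) (w : Fin N → ℂ)
    (hlam : ∀ i, lam i ∈ Bidisk) :
    (∃ φ : ℂ × ℂ → ℂ, DifferentiableOn ℂ φ Bidisk ∧
      (∀ z ∈ Bidisk, ‖φ z‖ ≤ 1) ∧ ∀ i, φ (lam i) = w i) ↔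
    ∃ Γ₁ Γ₂ : Matrix (Fin N) (Fin N) ℂ, Γ₁.PosSemidef ∧ Γ₂.PosSemidef ∧
      ∀ i j, 1 - w i * starRingEnd ℂ (w j) =
        (1 - (lam i).1 * starRingEnd ℂ ((lam j).1)) * Γ₁ i j +
        (1 - (lam i).2 * starRingEnd ℂ ((lam j).2)) * Γ₂ i j :=
  pick_theorem_bidisk_general lam w hlam
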